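/- arXiv:1501.04513 — 8 statements merged into one kernel-verified Lean document; each statement's English description precedes it below -/
import Mathlib

section
/- If X and Y are Borel subsets of ℝ^N, then their Minkowski sum X + Y := {x + y : x ∈ X, y ∈ Y} (with X + Y := ∅ if X = ∅ or Y = ∅) is Lebesgue measurable. -/
open MeasureTheory Filter Set
open scoped ENNReal NNReal Pointwise

noncomputable section

/-- `ℝ^N` with the Euclidean structure and Lebesgue measure. -/
abbrev ES (N : ℕ) := EuclideanSpace ℝ (Fin N)

variable {N : ℕ}

/-- The operation `(f ⊼ g)(x) = sup_y min (f (x - y)) (g y)` for extended-real valued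
functions. -/
def supMinE (f g : ES N → EReal) (x : ES N) : EReal := ⨆ y, min (f (x - y)) (g y)

/-- The operation `(f ⊻ g)(x) = inf_y max (f (x - y)) (g y)` for extended-real valued
functions. -/
def infMaxE (f g : ES N → EReal) (x : ES N) : EReal := ⨅ y, max (f (x - y)) (g y)

/-- The infimal convolution `(f □ g)(x) = inf_y (f (x - y) + g y)`. -/
def infConvE (f g : ES N → EReal) (x : ES N) : EReal := ⨅ y, (f (x - y) + g y)

/-- The operation `(f ⊼ g)(x) = sup_y min (f (x - y)) (g y)` for `[0,∞]`-valued functions. -/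
def supMin (f g : ES N → ℝ≥0∞) (x : ES N) : ℝ≥0∞ := ⨆ y, min (f (x - y)) (g y)

/-- A Young function: a nonconstant, nondecreasing, convex, left-continuous
`φ : [0,∞] → [0,∞]` with `φ 0 = 0`. -/
structure IsYoungFunction (φ : ℝ≥0∞ → ℝ≥0∞) : Prop where
  nonconstant : ∃ x y, φ x ≠ φ y
  map_zero : φ 0 = 0
  mono : Monotone φ
  convex : ∀ ⦃a b x y : ℝ≥0∞⦄, a + b = 1 → φ (a * x + b * y) ≤ a * φ x + b * φ y
  left_continuous : ∀ x, ContinuousWithinAt φ (Set.Iio x) x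

/-- The Luxemburg norm `‖h‖_φ = inf {r > 0 | ∫ φ (r⁻¹ |h|) ≤ 1}` (`= ∞` if no such `r`),
for a nonnegative function `h`. -/
def luxNorm (φ : ℝ≥0∞ → ℝ≥0∞) (h : ES N → ℝ≥0∞) : ℝ≥0∞ :=
  sInf {r : ℝ≥0∞ | 0 < r ∧ ∫⁻ x, φ (r⁻¹ * h x) ≤ 1}

/-- The nonnegative part of an extended real, as an element of `[0,∞]`. -/
def toENN (a : EReal) : ℝ≥0∞ := if a = ⊤ then ⊤ else ENNReal.ofReal a.toReal

/-- The reciprocal `1/a ∈ [0,∞]` of an extended real (intended for `a ≥ 0`), with the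
conventions `1/0 = ∞` and `1/∞ = 0`. -/
def eInv (a : EReal) : ℝ≥0∞ := (toENN a)⁻¹

/-- The enclosing radius of a set `X ⊆ ℝ^N`: the infimum of the radii of closed balls
containing `X` (`0` for `X = ∅`, `∞` if `X` is unbounded). -/
def encRadius (X : Set (ES N)) : ℝ≥0∞ := sInf {r : ℝ≥0∞ | ∃ c : ES N, ∀ x ∈ X, edist x c ≤ r}

/-- The transform `f̂(x) = γ_f^+(|x|)` where `γ_f^+(t) = inf {ξ | ρ_f^+(ξ) ≤ t}` and
`ρ_f^+(ξ)` is the enclosing radius of the upper level set `{f > ξ}`. -/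
def hatE (f : ES N → EReal) (x : ES N) : EReal :=
  sInf {ξ : EReal | encRadius {y | ξ < f y} ≤ (‖x‖₊ : ℝ≥0∞)}

/-- The lower transform `f̌ = -((-f)^)`. -/
def checkE (f : ES N → EReal) (x : ES N) : EReal := - hatE (fun y => - f y) x

/-- The transform `f̂` for `[0,∞]`-valued functions. -/
def hatT (f : ES N → ℝ≥0∞) (x : ES N) : ℝ≥0∞ :=
  sInf {ξ : ℝ≥0∞ | encRadius {y | ξ < f y} ≤ (‖x‖₊ : ℝ≥0∞)}

/-- The lower transform `f̌(x) = γ_f^-(|x|)`, `γ_f^-(t) = sup {ξ | ρ({f < ξ}) ≤ t}`,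
for `[0,∞]`-valued functions. -/
def checkT (f : ES N → ℝ≥0∞) (x : ES N) : ℝ≥0∞ :=
  sSup {ξ : ℝ≥0∞ | encRadius {y | f y < ξ} ≤ (‖x‖₊ : ℝ≥0∞)}

/-- The `L^p` "norm" (`p ∈ [1,∞]`, essential supremum when `p = ∞`) of a `[0,∞]`-valued
function. -/
def pNorm (p : ℝ≥0∞) (h : ES N → ℝ≥0∞) : ℝ≥0∞ :=
  if p = ∞ then essSup h volume else (∫⁻ x, h x ^ p.toReal) ^ (1 / p.toReal)

/-- An open set containing the compact box `{x | ∀ i, x i ≤ n i}` of the Baire space contains the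
box obtained by bounding only finitely many coordinates. -/
theorem exists_finite_box_subset_of_box_subset {n : ℕ → ℕ} {U : Set (ℕ → ℕ)} (hU : IsOpen U)
    (hnU : {x | ∀ i, x i ≤ n i} ⊆ U) : ∃ k, {x : ℕ → ℕ | ∀ i < k, x i ≤ n i} ⊆ U := by
  let := PiNat.metricSpaceNatNat
  have hK : IsCompact {x : ℕ → ℕ | ∀ i, x i ≤ n i} := by
    simpa using isCompact_pi_infinite fun i => (Set.finite_Iic (n i)).isCompact
  obtain ⟨δ, hδ, hsub⟩ := hK.exists_thickening_subset_open hU hnU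
  obtain ⟨k, hk⟩ := exists_pow_lt_of_lt_one hδ (one_half_lt_one (α := ℝ))
  refine ⟨k, fun x hx => hsub (Metric.mem_thickening_iff.2
    ⟨fun i => min (x i) (n i), fun i => min_le_right _ _, lt_of_le_of_lt ?_ hk⟩)⟩
  exact PiNat.mem_cylinder_iff_dist_le.1 fun i hi => (min_eq_left (hx i hi)).symm

namespace MeasureTheory

variable {α : Type*} [TopologicalSpace α] [MeasurableSpace α]

/-- The range of a continuous map on the Baire space is inner regular for compact sets, with
respect to any outer regular measure. -/
theorem exists_isCompact_subset_range_le_measure (μ : Measure α) [μ.OuterRegular]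
    {f : (ℕ → ℕ) → α} (hf : Continuous f) {c : ℝ≥0∞} (hc : c < μ (range f)) :
    ∃ K ⊆ range f, IsCompact K ∧ c ≤ μ K := by
  have step : ∀ (k : ℕ) (S : Set (ℕ → ℕ)), c < μ (f '' S) →
      ∃ m, c < μ (f '' (S ∩ {x | x k ≤ m})) := by
    intro k S hS
    have hUnion : f '' S = ⋃ m, f '' (S ∩ {x | x k ≤ m}) := by
      rw [← image_iUnion, ← inter_iUnion]
      congr 1
      ext x
      simpa using fun _ => ⟨x k, le_rfl⟩
    have hmono : Monotone fun m => f '' (S ∩ {x | x k ≤ m}) := fun a b hab =>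
      image_mono (inter_subset_inter_right _ fun x (hx : x k ≤ a) => hx.trans hab)
    rw [hUnion, hmono.measure_iUnion] at hS
    exact lt_iSup_iff.1 hS
  choose! m hm using step
  let S : ℕ → Set (ℕ → ℕ) := fun k => Nat.rec univ (fun k s => s ∩ {x | x k ≤ m k s}) k
  have hS : ∀ k, c < μ (f '' S k) := by
    intro k
    induction k with
    | zero => simpa [S] using hc
    | succ k ih => exact hm k (S k) ih
  have hS_le : ∀ k, ∀ x ∈ S k, ∀ i < k, x i ≤ m i (S i) := by
    intro k
    induction k with
    | zero => simp
    | succ k ih =>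
      rintro x ⟨hx, hxk⟩ i hi
      rcases Nat.lt_succ_iff_lt_or_eq.1 hi with h | rfl
      · exact ih x hx i h
      · exact hxk
  have hbox : IsCompact {x : ℕ → ℕ | ∀ i, x i ≤ m i (S i)} := by
    simpa using isCompact_pi_infinite fun i => (Set.finite_Iic (m i (S i))).isCompact
  refine ⟨_, image_subset_range _ _, hbox.image hf, ?_⟩
  rw [Set.measure_eq_iInf_isOpen]
  refine le_iInf₂ fun U hU => le_iInf fun hUo => ?_
  obtain ⟨k, hk⟩ := exists_finite_box_subset_of_box_subset (hUo.preimage hf) (image_subset_iff.1 hU)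
  exact (hS k).le.trans (measure_mono (image_subset_iff.2 fun x hx => hk (hS_le k x hx)))

/-- Analytic sets are universally measurable. -/
theorem AnalyticSet.nullMeasurableSet [PolishSpace α] [BorelSpace α] {s : Set α}
    (hs : AnalyticSet s) (μ : Measure α) [SigmaFinite μ] : NullMeasurableSet s μ := by
  have finite_case : ∀ (ν : Measure α) [IsFiniteMeasure ν], NullMeasurableSet s ν := by
    intro ν _
    rw [AnalyticSet] at hs
    obtain rfl | ⟨f, hf, rfl⟩ := hs
    · exact nullMeasurableSet_empty
    obtain h0 | hpos := eq_zero_or_pos (ν (range f))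
    · exact NullMeasurableSet.of_null h0
    obtain ⟨u, -, hu, hlim⟩ := exists_seq_strictMono_tendsto' hpos
    choose K hKs hK hKu using fun k =>
      exists_isCompact_subset_range_le_measure ν hf (hu k).2
    have hmeas : NullMeasurableSet (⋃ k, K k) ν :=
      (MeasurableSet.iUnion fun k => (hK k).measurableSet).nullMeasurableSet
    refine hmeas.congr (ae_eq_of_subset_of_measure_ge (iUnion_subset hKs) ?_ hmeas
      (measure_ne_top _ _))
    exact le_of_tendsto' hlim fun k => (hKu k).trans (measure_mono (subset_iUnion K k))
  rw [← inter_univ s, ← iUnion_spanningSets μ, inter_iUnion]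
  refine NullMeasurableSet.iUnion fun k => ?_
  have : IsFiniteMeasure (μ.restrict (spanningSets μ k)) :=
    isFiniteMeasure_restrict.2 (measure_spanningSets_lt_top μ k).ne
  exact (nullMeasurableSet_restrict (measurableSet_spanningSets μ k).nullMeasurableSet).1
    (finite_case _)

end MeasureTheory

theorem minkowski_sum_of_borel_null_measurable {N : ℕ}
    (X Y : Set (ES N)) (hX : MeasurableSet X) (hY : MeasurableSet Y) :
    NullMeasurableSet (X + Y) (volume : Measure (ES N)) := by
  rw [← add_image_prod]
  exact ((hX.prod hY).analyticSet.image_of_continuous continuous_add).nullMeasurableSet volume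

end
end

section
/- If f, g : ℝ^N → [0, ∞] are Lebesgue measurable with sup f = sup g (possibly ∞), and if f⊼g is Lebesgue measurable, then ∫_{ℝ^N} f dμ_N + ∫_{ℝ^N} g dμ_N ≤ ∫_{ℝ^N} (f⊼g) dμ_N. -/
open MeasureTheory Filter Set
open scoped ENNReal NNReal Pointwise

noncomputable section

variable {N : ℕ}

/-- The layer cake formula for `[0,∞]`-valued functions. -/
theorem lintegral_eq_lintegral_measure_ofReal_lt {α : Type*} [MeasurableSpace α]
    {μ : Measure α} [SFinite μ] {f : α → ℝ≥0∞} (hf : AEMeasurable f μ) :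
    ∫⁻ x, f x ∂μ = ∫⁻ t in Ioi (0 : ℝ), μ {x | ENNReal.ofReal t < f x} := by
  wlog hm : Measurable f generalizing f
  · rw [lintegral_congr_ae hf.ae_eq_mk, this hf.measurable_mk.aemeasurable hf.measurable_mk]
    refine lintegral_congr fun t => measure_congr ?_
    filter_upwards [hf.ae_eq_mk] with x hx
    exact congrArg (ENNReal.ofReal t < ·) hx.symm
  have hs : MeasurableSet {p : α × ℝ | ENNReal.ofReal p.2 < f p.1} :=
    measurableSet_lt (by fun_prop) (by fun_prop)
  have hsection (a : ℝ≥0∞) :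
      volume.restrict (Ioi (0 : ℝ)) {t | ENNReal.ofReal t < a} = a := by
    rw [Measure.restrict_apply (measurableSet_lt (by fun_prop) (by fun_prop))]
    induction a with
    | top => simp
    | coe a =>
      have : {t : ℝ | ENNReal.ofReal t < a} ∩ Ioi 0 = Ioo 0 (a : ℝ) := by
        ext t
        simp only [mem_inter_iff, mem_ofPred_eq, mem_Ioi, mem_Ioo]
        rw [and_comm]
        refine and_congr_right fun ht => ?_
        rw [ENNReal.ofReal_lt_iff_lt_toReal ht.le ENNReal.coe_ne_top, ENNReal.coe_toReal]
      simp [this]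
  calc ∫⁻ x, f x ∂μ
      = (μ.prod (volume.restrict (Ioi (0 : ℝ)))) {p | ENNReal.ofReal p.2 < f p.1} := by
        rw [Measure.prod_apply hs]
        exact lintegral_congr fun x => (hsection (f x)).symm
    _ = _ := Measure.prod_apply_symm hs

/-- The hyperplanes orthogonal to a coordinate axis are Lebesgue-null. -/
theorem volume_setOf_apply_eq (i : Fin N) (c : ℝ) :
    volume {x : ES N | x i = c} = 0 := by
  have h := (EuclideanSpace.volume_preserving_symm_measurableEquiv_toLp (Fin N)).measure_preimage
    (s := {x : Fin N → ℝ | x i = c})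
    (measurableSet_eq_fun (measurable_pi_apply i) measurable_const).nullMeasurableSet
  exact h.trans (Measure.pi_hyperplane (fun _ : Fin N => (volume : Measure ℝ)) i c)

/-- Superadditivity of Lebesgue measure under Minkowski addition, for compact sets. -/
theorem IsCompact.volume_add_volume_le_volume_add (hN : 0 < N) {A B : Set (ES N)}
    (hA : IsCompact A) (hB : IsCompact B) (hA' : A.Nonempty) (hB' : B.Nonempty) :
    volume A + volume B ≤ volume (A + B) := by
  let i : Fin N := ⟨0, hN⟩
  have hi : Continuous fun x : ES N => x i := by fun_prop
  obtain ⟨a, haA, ha⟩ := hA.exists_isMaxOn hA' hi.continuousOn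
  obtain ⟨b, hbB, hb⟩ := hB.exists_isMinOn hB' hi.continuousOn
  have hdisj : AEDisjoint volume (b +ᵥ A) (a +ᵥ B) := by
    refine measure_mono_null ?_ (volume_setOf_apply_eq i (a i + b i))
    rintro _ ⟨⟨x, hx, rfl⟩, ⟨y, hy, hxy⟩⟩
    have h₁ : x i ≤ a i := ha hx
    have h₂ : b i ≤ y i := hb hy
    have h₃ : a i + y i = b i + x i := congrArg (fun z : ES N => z i) hxy
    change b i + x i = a i + b i
    linarith
  calc volume A + volume B = volume (b +ᵥ A) + volume (a +ᵥ B) := by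
        rw [measure_vadd, measure_vadd]
    _ = volume ((b +ᵥ A) ∪ (a +ᵥ B)) :=
        (measure_union₀ (hB.vadd a).measurableSet.nullMeasurableSet hdisj).symm
    _ ≤ volume (A + B) := by
        refine measure_mono (union_subset ?_ ?_)
        · rintro _ ⟨x, hx, rfl⟩
          exact ⟨x, hx, b, hbB, add_comm x b⟩
        · rintro _ ⟨y, hy, rfl⟩
          exact ⟨a, haA, y, hy, rfl⟩

/-- A nonempty null-measurable set contains nonempty compact sets of almost full measure. -/
theorem MeasureTheory.NullMeasurableSet.exists_nonempty_isCompact_le {A : Set (ES N)}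
    (hA : NullMeasurableSet A) (hA' : A.Nonempty) {r : ℝ≥0∞} (hr : r < volume A) :
    ∃ K ⊆ A, IsCompact K ∧ K.Nonempty ∧ r ≤ volume K := by
  obtain ⟨a, ha⟩ := hA'
  obtain ⟨A', hsub, hm, hae⟩ := hA.exists_measurable_subset_ae_eq
  rw [← measure_congr hae] at hr
  obtain ⟨K, hKA, hK, hrK⟩ := hm.exists_lt_isCompact hr
  exact ⟨insert a K, insert_subset ha (hKA.trans hsub), hK.insert a, insert_nonempty a K,
    hrK.le.trans (measure_mono (subset_insert a K))⟩

/-- Superadditivity of Lebesgue measure under Minkowski addition. -/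
theorem MeasureTheory.NullMeasurableSet.volume_add_volume_le_volume_add (hN : 0 < N)
    {A B : Set (ES N)} (hA : NullMeasurableSet A) (hB : NullMeasurableSet B)
    (hA' : A.Nonempty) (hB' : B.Nonempty) :
    volume A + volume B ≤ volume (A + B) := by
  rcases eq_or_ne (volume A) 0 with hA₀ | hA₀
  · obtain ⟨a, ha⟩ := hA'
    rw [hA₀, zero_add, ← measure_vadd volume a B]
    refine measure_mono ?_
    rintro _ ⟨y, hy, rfl⟩
    exact ⟨a, ha, y, hy, rfl⟩
  rcases eq_or_ne (volume B) 0 with hB₀ | hB₀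
  · obtain ⟨b, hb⟩ := hB'
    rw [hB₀, add_zero, ← measure_vadd volume b A]
    refine measure_mono ?_
    rintro _ ⟨x, hx, rfl⟩
    exact ⟨x, hx, b, hb, add_comm x b⟩
  refine le_of_forall_lt fun c hc => ?_
  obtain ⟨r, hr, s, hs, hrs⟩ := ENNReal.exists_lt_add_of_lt_add hc hA₀ hB₀
  obtain ⟨K, hKA, hK, hK', hrK⟩ := hA.exists_nonempty_isCompact_le hA' hr
  obtain ⟨L, hLB, hL, hL', hsL⟩ := hB.exists_nonempty_isCompact_le hB' hs
  calc c < r + s := hrs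
    _ ≤ volume K + volume L := add_le_add hrK hsL
    _ ≤ volume (K + L) := hK.volume_add_volume_le_volume_add hN hL hK' hL'
    _ ≤ volume (A + B) := measure_mono (add_subset_add hKA hLB)

theorem setOf_lt_add_setOf_lt_subset (f g : ES N → ℝ≥0∞) (t : ℝ≥0∞) :
    {x | t < f x} + {x | t < g x} ⊆ {x | t < supMin f g x} := by
  rintro _ ⟨x, hx, y, hy, rfl⟩
  refine lt_of_lt_of_le ?_ (le_iSup (fun z => min (f (x + y - z)) (g z)) y)
  rw [add_sub_cancel_right]
  exact lt_min hx hy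

theorem lintegral_add_le_lintegral_supMin {N : ℕ} (hN : 0 < N)
    (f g : ES N → ℝ≥0∞) (hf : AEMeasurable f (volume : Measure (ES N)))
    (hg : AEMeasurable g (volume : Measure (ES N)))
    (hsup : (⨆ x, f x) = ⨆ x, g x)
    (hfg : AEMeasurable (supMin f g) (volume : Measure (ES N))) :
    (∫⁻ x, f x) + ∫⁻ x, g x ≤ ∫⁻ x, supMin f g x := by
  have hanti : Antitone fun t : ℝ => volume {x | ENNReal.ofReal t < f x} := fun s t hst =>
    measure_mono fun _ hx => (ENNReal.ofReal_le_ofReal hst).trans_lt hx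
  rw [lintegral_eq_lintegral_measure_ofReal_lt hf, lintegral_eq_lintegral_measure_ofReal_lt hg,
    lintegral_eq_lintegral_measure_ofReal_lt hfg, ← lintegral_add_left hanti.measurable]
  refine lintegral_mono fun t => ?_
  change volume {x | ENNReal.ofReal t < f x} + volume {x | ENNReal.ofReal t < g x} ≤ _
  by_cases ht : ENNReal.ofReal t < ⨆ x, f x
  · obtain ⟨a, ha⟩ := lt_iSup_iff.1 ht
    obtain ⟨b, hb⟩ := lt_iSup_iff.1 (hsup ▸ ht)
    exact (NullMeasurableSet.volume_add_volume_le_volume_add hN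
      (nullMeasurableSet_lt aemeasurable_const hf) (nullMeasurableSet_lt aemeasurable_const hg)
      ⟨a, ha⟩ ⟨b, hb⟩).trans
      (measure_mono (setOf_lt_add_setOf_lt_subset f g _))
  · have hf₀ : {x | ENNReal.ofReal t < f x} = ∅ :=
      eq_empty_of_forall_notMem fun x hx => ht (lt_iSup_iff.2 ⟨x, hx⟩)
    have hg₀ : {x | ENNReal.ofReal t < g x} = ∅ :=
      eq_empty_of_forall_notMem fun x hx => ht (hsup ▸ lt_iSup_iff.2 ⟨x, hx⟩)
    simp [hf₀, hg₀]

end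
end

section
/- Suppose f, g : ℝ^N → [−∞, ∞] are Borel measurable, g ≥ 0, f is not identically ∞ and g is not identically ∞. Let f_+ := max{f, 0}, so 0 ≤ m_{f_+} + m_g < ∞, and set m := m_{f_+,g} = (m_{f_+} − m_g)/2. Then f_+ − m, g + m and f⊻g are nonnegative, f⊻g is Lebesgue measurable, and for every Young function φ: ‖(f_+ − m)⁻¹‖_φ + ‖(g + m)⁻¹‖_φ ≤ 4 ‖(f⊻g)⁻¹‖_φ. -/
open MeasureTheory Filter Set
open scoped ENNReal NNReal Pointwise

noncomputable section

variable {N : ℕ}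

theorem exists_cylinder_subset_of_isCompact {K V : Set (ℕ → ℕ)} (hK : IsCompact K)
    (hV : IsOpen V) (hKV : K ⊆ V) : ∃ m, ∀ y ∈ K, PiNat.cylinder y m ⊆ V := by
  refine hK.induction_on (p := fun S => ∃ m, ∀ y ∈ S, PiNat.cylinder y m ⊆ V)
    ⟨0, by simp⟩ ?_ ?_ ?_
  · rintro s t hst ⟨m, hm⟩
    exact ⟨m, fun y hy => hm y (hst hy)⟩
  · rintro s t ⟨m, hm⟩ ⟨n, hn⟩
    refine ⟨max m n, ?_⟩
    rintro y (hy | hy)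
    · exact (PiNat.cylinder_anti y (le_max_left m n)).trans (hm y hy)
    · exact (PiNat.cylinder_anti y (le_max_right m n)).trans (hn y hy)
  · intro z hz
    obtain ⟨v, ⟨x, m, rfl⟩, hzv, hvV⟩ :=
      (PiNat.isTopologicalBasis_cylinders (fun _ : ℕ => ℕ)).isOpen_iff.1 hV z (hKV hz)
    refine ⟨PiNat.cylinder x m,
      mem_nhdsWithin_of_mem_nhds ((PiNat.isOpen_cylinder _ x m).mem_nhds hzv), m, ?_⟩
    intro y hy
    rwa [PiNat.mem_cylinder_iff_eq.1 hy]

/-- The truncated boxes `{x | x i ≤ n i for i < k}` shrink to the compact box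
`{x | ∀ i, x i ≤ n i}`. -/
theorem exists_truncatedBox_subset {n : ℕ → ℕ} {V : Set (ℕ → ℕ)} (hV : IsOpen V)
    (h : Set.univ.pi (fun i => Set.Iic (n i)) ⊆ V) :
    ∃ k, {x : ℕ → ℕ | ∀ i < k, x i ≤ n i} ⊆ V := by
  have hK : IsCompact (Set.univ.pi (fun i => Set.Iic (n i))) :=
    isCompact_univ_pi fun i => (Set.finite_Iic (n i)).isCompact
  obtain ⟨m, hm⟩ := exists_cylinder_subset_of_isCompact hK hV h
  refine ⟨m, fun x hx => hm (fun i => min (x i) (n i)) (fun i _ => mem_Iic.2 (min_le_right _ _)) ?_⟩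
  intro i hi
  exact (min_eq_left (hx i hi)).symm

/-- A continuous image of the Baire space is approximated from inside, in outer measure, by
compact sets. -/
theorem exists_isCompact_subset_range_measure_le {α : Type*} [TopologicalSpace α]
    [MeasurableSpace α] (μ : Measure α) [μ.OuterRegular]
    {F : (ℕ → ℕ) → α} (hF : Continuous F) {c : ℝ≥0∞} (hc : c < μ (range F)) :
    ∃ K ⊆ range F, IsCompact K ∧ c ≤ μ K := by
  have step : ∀ (k : ℕ) (S : Set (ℕ → ℕ)), c < μ (F '' S) →
      ∃ j, c < μ (F '' (S ∩ {x | x k ≤ j})) := by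
    intro k S hS
    have hU : F '' S = ⋃ j : ℕ, F '' (S ∩ {x | x k ≤ j}) := by
      rw [← image_iUnion, ← inter_iUnion]
      congr 1
      refine (inter_eq_left.2 fun x _ => mem_iUnion.2 ⟨x k, le_refl (x k)⟩).symm
    have hmono : Monotone fun j : ℕ => F '' (S ∩ {x | x k ≤ j}) := fun i j hij =>
      image_mono (inter_subset_inter_right _ fun x (hx : x k ≤ i) => hx.trans hij)
    rw [hU, hmono.measure_iUnion] at hS
    exact lt_iSup_iff.1 hS
  choose! j hj using step
  let S : ℕ → Set (ℕ → ℕ) := fun k =>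
    Nat.rec Set.univ (fun k T => T ∩ {x | x k ≤ j k T}) k
  let n : ℕ → ℕ := fun k => j k (S k)
  have hS : ∀ k, S k = {x | ∀ i < k, x i ≤ n i} := by
    intro k
    induction k with
    | zero => simp [S]
    | succ k ih =>
      have : S (k + 1) = S k ∩ {x | x k ≤ n k} := rfl
      rw [this, ih]
      ext x
      change ((∀ i < k, x i ≤ n i) ∧ x k ≤ n k) ↔ ∀ i < k + 1, x i ≤ n i
      exact Nat.forall_lt_succ_right.symm
  have hcS : ∀ k, c < μ (F '' S k) := by
    intro k
    induction k with
    | zero => simpa [S] using hc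
    | succ k ih => exact hj k (S k) ih
  have hK : IsCompact (Set.univ.pi (fun i => Set.Iic (n i))) :=
    isCompact_univ_pi fun i => (Set.finite_Iic (n i)).isCompact
  refine ⟨F '' Set.univ.pi (fun i => Set.Iic (n i)), image_subset_range _ _, hK.image hF, ?_⟩
  refine le_of_forall_gt fun r hr => ?_
  obtain ⟨U, hKU, hU, hUr⟩ := Set.exists_isOpen_lt_of_lt _ r hr
  obtain ⟨k, hk⟩ := exists_truncatedBox_subset (hU.preimage hF) (image_subset_iff.1 hKU)
  rw [← hS k] at hk
  exact ((hcS k).trans_le (measure_mono (image_subset_iff.2 hk))).trans hUr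

/-- Analytic sets are measurable with respect to the completion of every s-finite measure. -/
theorem analyticSet_nullMeasurableSet {α : Type*} [TopologicalSpace α]
    [TopologicalSpace.PseudoMetrizableSpace α] [T2Space α] [MeasurableSpace α] [BorelSpace α]
    (μ : Measure α) [SFinite μ] {s : Set α} (hs : AnalyticSet s) : NullMeasurableSet s μ := by
  refine NullMeasurableSet.mono_ac (μ := μ.toFinite) ?_ (absolutelyContinuous_toFinite μ)
  rw [AnalyticSet] at hs
  rcases hs with rfl | ⟨F, hF, rfl⟩
  · exact nullMeasurableSet_empty
  let ν := μ.toFinite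
  rcases eq_or_ne (ν (range F)) 0 with h0 | h0
  · exact NullMeasurableSet.of_null h0
  obtain ⟨c, -, hc, hlim⟩ := exists_seq_strictMono_tendsto' (pos_iff_ne_zero.2 h0)
  choose K hKs hK hcK using fun i =>
    exists_isCompact_subset_range_measure_le ν hF (hc i).2
  have hmeas : MeasurableSet (⋃ i, K i) := .iUnion fun i => (hK i).measurableSet
  have hle : ν (range F) ≤ ν (⋃ i, K i) :=
    le_of_tendsto' hlim fun i => (hcK i).trans (measure_mono (subset_iUnion K i))
  exact hmeas.nullMeasurableSet.congr
    (ae_eq_of_subset_of_measure_ge (iUnion_subset hKs) hle hmeas.nullMeasurableSet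
      (measure_ne_top ν _))

/-- Layer-cake comparison: a function whose superlevel sets have smaller measure has a smaller
integral. -/
theorem lintegral_le_of_measure_superlevel_le {α : Type*} [MeasurableSpace α] {μ : Measure α}
    {u w : α → ℝ≥0∞} (hu : AEMeasurable u μ) (hw : AEMeasurable w μ)
    (h : ∀ s, μ {x | s < u x} ≤ μ {x | s < w x}) : ∫⁻ x, u x ∂μ ≤ ∫⁻ x, w x ∂μ := by
  have trunc : ∀ n : ℕ, ∫⁻ x, min (u x) n ∂μ ≤ ∫⁻ x, min (w x) n ∂μ := by
    intro n
    have layer : ∀ v : α → ℝ≥0∞, AEMeasurable v μ →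
        ∫⁻ x, min (v x) n ∂μ =
          ∫⁻ t in Ioi (0 : ℝ), μ {x | ENNReal.ofReal t < min (v x) n} := by
      intro v hv
      have hfin : ∀ x, min (v x) n ≠ ∞ := fun x =>
        ne_top_of_le_ne_top (ENNReal.natCast_ne_top n) (min_le_right _ _)
      have := lintegral_eq_lintegral_meas_lt μ (f := fun x => (min (v x) n).toReal)
        (ae_of_all _ fun x => ENNReal.toReal_nonneg)
        (hv.min aemeasurable_const).ennreal_toReal
      simp only [ENNReal.ofReal_toReal (hfin _)] at this
      rw [this]
      refine setLIntegral_congr_fun measurableSet_Ioi fun t ht => ?_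
      simp only [← ENNReal.ofReal_lt_iff_lt_toReal (le_of_lt ht) (hfin _)]
    rw [layer u hu, layer w hw]
    refine lintegral_mono fun t => ?_
    by_cases ht : ENNReal.ofReal t < n
    · simpa [lt_min_iff, ht] using h (ENNReal.ofReal t)
    · simp [ht]
  have hsup : ∀ v : α → ℝ≥0∞, AEMeasurable v μ →
      ∫⁻ x, v x ∂μ = ⨆ n : ℕ, ∫⁻ x, min (v x) n ∂μ := by
    intro v hv
    rw [← lintegral_iSup' (fun n => hv.min aemeasurable_const)
      (ae_of_all _ fun x i j hij => min_le_min_left _ (by exact_mod_cast hij))]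
    refine lintegral_congr fun x => ?_
    rw [← inf_iSup_eq, ENNReal.iSup_natCast, inf_top_eq]
  rw [hsup u hu, hsup w hw]
  exact iSup_mono trunc

/-- The strict superlevel sets of a Young function are open half-lines. -/
theorem IsYoungFunction.exists_lt_iff {φ : ℝ≥0∞ → ℝ≥0∞} (hφ : IsYoungFunction φ) (s : ℝ≥0∞) :
    ∃ c, ∀ z, s < φ z ↔ c < z := by
  let A := {z | φ z ≤ s}
  have hcA : φ (sSup A) ≤ s := by
    by_contra! hlt
    have hpos : 0 < sSup A := by
      refine pos_iff_ne_zero.2 fun h0 => ?_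
      rw [h0, hφ.map_zero] at hlt
      exact not_lt_zero hlt
    have hev := (hφ.left_continuous (sSup A)).eventually (lt_mem_nhds hlt)
    obtain ⟨l, hl, hlA⟩ := (mem_nhdsLT_iff_exists_Ioo_subset' hpos).1 hev
    obtain ⟨z, hzA, hlz⟩ := lt_sSup_iff.1 (show l < sSup A from hl)
    rcases (le_sSup hzA).eq_or_lt with heq | hzc
    · rw [← heq] at hlt
      exact hlt.not_ge hzA
    · exact (show s < φ z from hlA ⟨hlz, hzc⟩).not_ge hzA
  refine ⟨sSup A, fun z => ⟨fun hz => ?_, fun hz => ?_⟩⟩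
  · by_contra! hle
    exact (hz.trans_le (hφ.mono hle)).not_ge hcA
  · by_contra! hle
    exact hz.not_ge (le_sSup hle)

theorem IsYoungFunction.lintegral_comp_le {α : Type*} [MeasurableSpace α] {μ : Measure α}
    {φ : ℝ≥0∞ → ℝ≥0∞} (hφ : IsYoungFunction φ) {u w : α → ℝ≥0∞} (hu : AEMeasurable u μ)
    (hw : AEMeasurable w μ) (h : ∀ s, μ {x | s < u x} ≤ μ {x | s < w x}) :
    ∫⁻ x, φ (u x) ∂μ ≤ ∫⁻ x, φ (w x) ∂μ := by
  refine lintegral_le_of_measure_superlevel_le (hφ.mono.measurable.comp_aemeasurable hu)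
    (hφ.mono.measurable.comp_aemeasurable hw) fun s => ?_
  obtain ⟨c, hc⟩ := hφ.exists_lt_iff s
  simpa only [Function.comp_apply, hc] using h c

theorem luxNorm_le_two_mul {φ : ℝ≥0∞ → ℝ≥0∞} (hφ : IsYoungFunction φ) {u v : ES N → ℝ≥0∞}
    (hu : AEMeasurable u) (hv : AEMeasurable v)
    (h : ∀ s, volume {x | s < u x} ≤ volume {x | s < 2 * v x}) :
    luxNorm φ u ≤ 2 * luxNorm φ v := by
  rw [mul_comm, ← ENNReal.div_le_iff (by simp) (by simp)]
  refine le_sInf fun r ⟨hr, hint⟩ => ?_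
  rw [ENNReal.div_le_iff (by simp) (by simp), mul_comm]
  refine sInf_le ⟨ENNReal.mul_pos (by simp) hr.ne', le_trans ?_ hint⟩
  have hcancel : ∀ x, r⁻¹ * v x = (2 * r)⁻¹ * (2 * v x) := by
    intro x
    rw [ENNReal.mul_inv (by simp) (by simp), mul_mul_mul_comm,
      ENNReal.inv_mul_cancel (by simp) (by simp), one_mul]
  simp only [hcancel]
  refine hφ.lintegral_comp_le (hu.const_mul _) ((hv.const_mul _).const_mul _) fun s => ?_
  rcases eq_or_ne (2 * r)⁻¹ 0 with hc | hc
  · simp [hc]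
  · have hc' : (2 * r)⁻¹ ≠ ∞ := by simp [hr.ne']
    simpa only [← ENNReal.div_lt_iff (Or.inl hc) (Or.inl hc'), mul_comm (2 * r)⁻¹]
      using h (s / (2 * r)⁻¹)

theorem toENN_eq_toENNReal (e : EReal) : toENN e = e.toENNReal := rfl

theorem lt_eInv_iff {e : EReal} (he : 0 ≤ e) (s : ℝ≥0∞) :
    s < eInv e ↔ e < ((s⁻¹ : ℝ≥0∞) : EReal) := by
  rw [eInv, toENN_eq_toENNReal, ENNReal.lt_inv_iff_lt_inv, ← EReal.coe_ennreal_lt_coe_ennreal_iff,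
    EReal.coe_toENNReal he]

theorem lt_two_mul_eInv_iff {e : EReal} (he : 0 ≤ e) (s : ℝ≥0∞) :
    s < 2 * eInv e ↔ e < ((2 * s⁻¹ : ℝ≥0∞) : EReal) := by
  rw [mul_comm, ← ENNReal.div_lt_iff (by simp) (by simp), lt_eInv_iff he,
    ENNReal.inv_div (by simp) (by simp), div_eq_mul_inv]

theorem measurable_eInv : Measurable eInv :=
  measurable_ereal_toENNReal.inv

theorem infMaxE_lt_iff (f g : ES N → EReal) (t : EReal) (x : ES N) :
    infMaxE f g x < t ↔ x ∈ {y | f y < t} + {y | g y < t} := by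
  simp only [infMaxE, iInf_lt_iff, max_lt_iff, Set.mem_add]
  constructor
  · rintro ⟨y, h1, h2⟩
    exact ⟨x - y, h1, y, h2, sub_add_cancel x y⟩
  · rintro ⟨z, hz, y, hy, rfl⟩
    exact ⟨y, by simpa using hz, hy⟩

theorem infMaxE_comm (f g : ES N → EReal) : infMaxE f g = infMaxE g f := by
  funext x
  refine eq_of_forall_gt_iff fun t => ?_
  rw [infMaxE_lt_iff, infMaxE_lt_iff, add_comm]

theorem infMaxE_max_zero {f g : ES N → EReal} (hg0 : ∀ x, 0 ≤ g x) :
    infMaxE (fun x => max (f x) 0) g = infMaxE f g := by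
  funext x
  simp only [infMaxE, max_assoc, max_eq_right (hg0 _)]

theorem aemeasurable_infMaxE {f g : ES N → EReal} (hf : Measurable f) (hg : Measurable g) :
    AEMeasurable (infMaxE f g) := by
  have hnull : NullMeasurable (infMaxE f g) (volume : Measure (ES N)) := by
    refine measurable_of_Iio (δ := NullMeasurableSpace (ES N) volume) fun t => ?_
    have hset : infMaxE f g ⁻¹' Iio t = {y | f y < t} + {y | g y < t} := by
      ext x
      exact infMaxE_lt_iff f g t x
    change NullMeasurableSet (infMaxE f g ⁻¹' Iio t) volume
    rw [hset, ← image2_add, ← image_prod]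
    exact analyticSet_nullMeasurableSet volume
      ((hf measurableSet_Iio).prod (hg measurableSet_Iio) |>.analyticSet_image measurable_add)
  exact hnull.aemeasurable

/-- The value `F x` shifted by half the difference of the infima is bounded below by the average
of the infima. -/
theorem average_le_sub {F : ES N → EReal} {a b : ℝ} (ha : (⨅ x, F x) = (a : EReal)) (x : ES N) :
    (((a + b) / 2 : ℝ) : EReal) ≤ F x - (((a - b) / 2 : ℝ) : EReal) := by
  have h : (a : EReal) ≤ F x := ha ▸ iInf_le F x
  calc (((a + b) / 2 : ℝ) : EReal) = (a : EReal) - (((a - b) / 2 : ℝ) : EReal) := by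
        rw [← EReal.coe_sub]; congr 1; ring
    _ ≤ _ := EReal.sub_le_sub h le_rfl

theorem volume_sub_lt_le_volume_infMaxE_lt {F G : ES N → EReal}
    {a b : ℝ} (ha0 : 0 ≤ a) (hb0 : 0 ≤ b) (ha : (⨅ x, F x) = (a : EReal))
    (hb : (⨅ x, G x) = (b : EReal)) (T : ℝ≥0∞) :
    volume {x | F x - (((a - b) / 2 : ℝ) : EReal) < (T : EReal)} ≤
      volume {x | infMaxE F G x < ((2 * T : ℝ≥0∞) : EReal)} := by
  by_cases hT : ((2 * T : ℝ≥0∞) : EReal) ≤ ((max a b : ℝ) : EReal)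
  · have hempty : {x | F x - (((a - b) / 2 : ℝ) : EReal) < (T : EReal)} = ∅ := by
      refine eq_empty_of_forall_notMem fun x hx => ?_
      have h2 := (average_le_sub (b := b) ha x).trans_lt hx
      induction T with
      | top => simp [ENNReal.mul_top] at hT
      | coe t =>
        have e1 : (((2 * t : ℝ≥0) : ℝ) : EReal) ≤ ((max a b : ℝ) : EReal) := by
          rwa [← ENNReal.coe_ofNat, ← ENNReal.coe_mul] at hT
        have e2 : (((a + b) / 2 : ℝ) : EReal) < ((t : ℝ) : EReal) := h2
        rw [EReal.coe_le_coe_iff] at e1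
        rw [EReal.coe_lt_coe_iff] at e2
        push_cast at e1
        have := max_le_add_of_nonneg ha0 hb0
        linarith
    rw [hempty, measure_empty]
    exact zero_le
  · push Not at hT
    have hbT : (⨅ x, G x) < ((2 * T : ℝ≥0∞) : EReal) := by
      rw [hb]
      exact lt_of_le_of_lt (EReal.coe_le_coe_iff.2 (le_max_right a b)) hT
    obtain ⟨y, hy⟩ := iInf_lt_iff.1 hbT
    have hsub : {x | F x - (((a - b) / 2 : ℝ) : EReal) < (T : EReal)} ⊆
        (fun x => x + y) ⁻¹' {x | infMaxE F G x < ((2 * T : ℝ≥0∞) : EReal)} := by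
      intro x hx
      refine (infMaxE_lt_iff F G _ _).2 (add_mem_add ?_ hy)
      have hx' : F x - (((a - b) / 2 : ℝ) : EReal) < (T : EReal) := hx
      change F x < _
      induction T with
      | top =>
        simp only [ENNReal.mul_top (two_ne_zero), EReal.coe_ennreal_top] at hx' ⊢
        refine lt_top_iff_ne_top.2 fun h => ?_
        simp [h] at hx'
      | coe t =>
        have e1 : ((max a b : ℝ) : EReal) < (((2 * t : ℝ≥0) : ℝ) : EReal) := by
          rwa [← ENNReal.coe_ofNat, ← ENNReal.coe_mul] at hT
        have e2 : F x - (((a - b) / 2 : ℝ) : EReal) < ((t : ℝ) : EReal) := hx'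
        change F x < (((2 * t : ℝ≥0) : ℝ) : EReal)
        rw [EReal.coe_lt_coe_iff] at e1
        push_cast at e1
        have := le_max_left a b
        induction hF : F x with
        | bot => exact EReal.bot_lt_coe _
        | top => simp [hF] at e2
        | coe r =>
          rw [hF, ← EReal.coe_sub, EReal.coe_lt_coe_iff] at e2
          rw [EReal.coe_lt_coe_iff]
          push_cast
          linarith
    refine (measure_mono hsub).trans_eq ?_
    exact measure_preimage_add_right _ y _

theorem luxNorm_inv_sub_le {F G : ES N → EReal} (hF : Measurable F) (hG : Measurable G)
    {a b : ℝ} (ha0 : 0 ≤ a) (hb0 : 0 ≤ b) (ha : (⨅ x, F x) = (a : EReal))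
    (hb : (⨅ x, G x) = (b : EReal)) (hFG : ∀ x, 0 ≤ infMaxE F G x)
    {φ : ℝ≥0∞ → ℝ≥0∞} (hφ : IsYoungFunction φ) :
    luxNorm φ (fun x => eInv (F x - (((a - b) / 2 : ℝ) : EReal))) ≤
      2 * luxNorm φ (fun x => eInv (infMaxE F G x)) := by
  have h0 : ∀ x, 0 ≤ F x - (((a - b) / 2 : ℝ) : EReal) := fun x =>
    (EReal.coe_nonneg.2 (by positivity)).trans (average_le_sub (b := b) ha x)
  refine luxNorm_le_two_mul hφ
    (measurable_eInv.comp (hF.sub measurable_const)).aemeasurable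
    (measurable_eInv.comp_aemeasurable (aemeasurable_infMaxE hF hG)) fun s => ?_
  simp only [lt_eInv_iff (h0 _), lt_two_mul_eInv_iff (hFG _)]
  exact volume_sub_lt_le_volume_infMaxE_lt ha0 hb0 ha hb s⁻¹

theorem luxNorm_inv_add_le_four_luxNorm_inv_infMax {N : ℕ} (hN : 0 < N)
    (f g : ES N → EReal) (hf : Measurable f) (hg : Measurable g)
    (hg0 : ∀ x, 0 ≤ g x) (hfne : ∃ x, f x ≠ ⊤) (hgne : ∃ x, g x ≠ ⊤)
    (a b : ℝ) (ha : (⨅ x, max (f x) 0) = (a : EReal)) (hb : (⨅ x, g x) = (b : EReal)) :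
    (∀ x, 0 ≤ max (f x) 0 - (((a - b) / 2 : ℝ) : EReal)) ∧
    (∀ x, 0 ≤ g x + (((a - b) / 2 : ℝ) : EReal)) ∧
    (∀ x, 0 ≤ infMaxE f g x) ∧
    AEMeasurable (infMaxE f g) (volume : Measure (ES N)) ∧
    ∀ φ : ℝ≥0∞ → ℝ≥0∞, IsYoungFunction φ →
      luxNorm φ (fun x => eInv (max (f x) 0 - (((a - b) / 2 : ℝ) : EReal))) +
        luxNorm φ (fun x => eInv (g x + (((a - b) / 2 : ℝ) : EReal))) ≤
      4 * luxNorm φ (fun x => eInv (infMaxE f g x)) := by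
  have hF : Measurable fun x => max (f x) 0 := hf.max measurable_const
  have ha0 : 0 ≤ a := EReal.coe_nonneg.1 (ha ▸ le_iInf fun x => le_max_right _ _)
  have hb0 : 0 ≤ b := EReal.coe_nonneg.1 (hb ▸ le_iInf hg0)
  have hneg : ∀ x, g x + (((a - b) / 2 : ℝ) : EReal) = g x - (((b - a) / 2 : ℝ) : EReal) := by
    intro x
    rw [sub_eq_add_neg (g x), ← EReal.coe_neg]
    congr 2
    ring
  have hh0 : ∀ x, 0 ≤ infMaxE f g x := fun x => le_iInf fun y => le_max_of_le_right (hg0 y)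
  refine ⟨fun x => (EReal.coe_nonneg.2 (by positivity)).trans (average_le_sub (b := b) ha x),
    fun x => ?_, hh0, aemeasurable_infMaxE hf hg, fun φ hφ => ?_⟩
  · rw [hneg]
    exact (EReal.coe_nonneg.2 (by positivity)).trans (average_le_sub (b := a) hb x)
  · simp only [hneg]
    have h1 := luxNorm_inv_sub_le hF hg ha0 hb0 ha hb
      (by rwa [infMaxE_max_zero hg0]) hφ
    have h2 := luxNorm_inv_sub_le hg hF hb0 ha0 hb ha
      (by rwa [infMaxE_comm, infMaxE_max_zero hg0]) hφ
    rw [infMaxE_max_zero hg0] at h1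
    rw [infMaxE_comm, infMaxE_max_zero hg0] at h2
    refine (add_le_add h1 h2).trans_eq ?_
    rw [← add_mul]
    norm_num

end
end

section
/- For every function f : ℝ^N → [−∞, ∞] and every ξ ∈ [−∞, ∞], the upper level set {x ∈ ℝ^N : f̂(x) > ξ} of the transform f̂ has Lebesgue measure equal to μ_N(B̄_{F_ξ^+}) = ω_N ρ_f^+(ξ)^N, the measure of the enclosing ball of the upper level set F_ξ^+ := {x : f(x) > ξ}. -/
open MeasureTheory Filter Set
open scoped ENNReal NNReal Pointwise

noncomputable section

variable {N : ℕ}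

theorem encRadius_mono {N : ℕ} {X Y : Set (ES N)} (h : X ⊆ Y) : encRadius X ≤ encRadius Y :=
  sInf_le_sInf fun _ ⟨c, hc⟩ => ⟨c, fun x hx => hc x (h hx)⟩

theorem encRadius_le_of_forall_mem {N : ℕ} {X : Set (ES N)} {r : ℝ≥0∞} (c : ES N)
    (h : ∀ x ∈ X, edist x c ≤ r) : encRadius X ≤ r :=
  sInf_le ⟨c, h⟩

theorem exists_center_of_encRadius_lt {N : ℕ} {X : Set (ES N)} {r : ℝ≥0∞}
    (h : encRadius X < r) : ∃ c : ES N, ∀ x ∈ X, edist x c ≤ r := by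
  obtain ⟨s, ⟨c, hc⟩, hs⟩ := sInf_lt_iff.1 h
  exact ⟨c, fun x hx => (hc x hx).trans hs.le⟩

/-- A finite bound on the enclosing radii of the sets `X n` passes to any set each of whose
points eventually belongs to `X n`. -/
theorem encRadius_le_of_eventually_mem {N : ℕ} {X : ℕ → Set (ES N)} {Y : Set (ES N)} {t : ℝ≥0}
    (hX : ∀ n, encRadius (X n) ≤ t) (hY : ∀ y ∈ Y, ∀ᶠ n in atTop, y ∈ X n) :
    encRadius Y ≤ t := by
  rcases Y.eq_empty_or_nonempty with rfl | ⟨y₀, hy₀⟩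
  · exact encRadius_le_of_forall_mem 0 (by simp)
  have hlt (n : ℕ) : (t : ℝ≥0∞) < t + ((n : ℝ≥0∞) + 1)⁻¹ :=
    ENNReal.lt_add_right ENNReal.coe_ne_top
      (ENNReal.inv_ne_zero.2 (by finiteness))
  choose c hc using fun n => exists_center_of_encRadius_lt ((hX n).trans_lt (hlt n))
  have hbdd : ∀ᶠ n in atTop, c n ∈ Metric.closedBall y₀ (t + 1) := by
    filter_upwards [hY y₀ hy₀] with n hn
    have h : edist y₀ (c n) ≤ ((t + 1 : ℝ≥0) : ℝ≥0∞) := by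
      refine (hc n y₀ hn).trans ?_
      push_cast
      gcongr
      exact ENNReal.inv_le_one.2 le_add_self
    rw [edist_le_coe, ← NNReal.coe_le_coe, coe_nndist, dist_comm] at h
    simpa using h
  obtain ⟨a, -, φ, hφ, ha⟩ := (isCompact_closedBall y₀ ((t : ℝ) + 1)).tendsto_subseq'
    hbdd.frequently
  refine encRadius_le_of_forall_mem a fun y hy => ?_
  have hlim : Tendsto (fun n : ℕ => (t : ℝ≥0∞) + ((n : ℝ≥0∞) + 1)⁻¹) atTop (nhds t) := by
    have h : Tendsto (fun n : ℕ => (((n + 1 : ℕ) : ℝ≥0∞))⁻¹) atTop (nhds 0) :=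
      (tendsto_add_atTop_iff_nat 1).2 ENNReal.tendsto_inv_nat_nhds_zero
    simpa using h.const_add (t : ℝ≥0∞)
  refine le_of_tendsto_of_tendsto (tendsto_const_nhds.edist ha)
    (hlim.comp hφ.tendsto_atTop) ?_
  filter_upwards [hφ.tendsto_atTop.eventually (hY y hy)] with n hn
  exact hc (φ n) y hn

/-- The infimum defining the transform is attained. -/
theorem hatE_le_iff {N : ℕ} {f : ES N → EReal} {x : ES N} {ξ : EReal} :
    hatE f x ≤ ξ ↔ encRadius {y | ξ < f y} ≤ ‖x‖₊ := by
  refine ⟨fun h => ?_, fun h => sInf_le h⟩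
  have habove (η : EReal) (hη : ξ < η) : encRadius {y | η < f y} ≤ ‖x‖₊ := by
    obtain ⟨ζ, hζ, hζη⟩ := sInf_lt_iff.1 (h.trans_lt hη)
    exact (encRadius_mono fun y (hy : η < f y) => hζη.trans hy).trans hζ
  rcases eq_or_ne ξ ⊤ with rfl | hξ
  · exact encRadius_le_of_forall_mem 0 (by simp)
  obtain ⟨u, -, hu, hlim⟩ := exists_seq_strictAnti_tendsto' hξ.lt_top
  exact encRadius_le_of_eventually_mem (fun n => habove (u n) (hu n).1)
    fun y hy => hlim.eventually_lt_const hy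

theorem setOf_lt_hatE {N : ℕ} (f : ES N → EReal) (ξ : EReal) :
    {x : ES N | ξ < hatE f x} = Metric.eball 0 (encRadius {x : ES N | ξ < f x}) := by
  ext x
  rw [mem_ofPred_eq, ← not_le, hatE_le_iff, not_le, Metric.mem_eball, edist_zero_right]
  rfl

theorem volume_eball_zero {N : ℕ} (hN : 0 < N) (r : ℝ≥0∞) :
    volume (Metric.eball (0 : ES N) r) = volume (Metric.ball (0 : ES N) 1) * r ^ N := by
  have : Nonempty (Fin N) := ⟨⟨0, hN⟩⟩
  induction r with
  | top =>
    rw [Metric.eball_top, ENNReal.top_pow hN.ne', ENNReal.mul_top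
      (Metric.measure_ball_pos volume _ one_pos).ne']
    exact measure_univ_of_isAddLeftInvariant _
  | coe r =>
    rw [Metric.eball_coe, Measure.addHaar_ball _ _ r.coe_nonneg, finrank_euclideanSpace_fin,
      ENNReal.ofReal_pow r.coe_nonneg, ENNReal.ofReal_coe_nnreal, mul_comm]

theorem volume_upperLevel_hatE {N : ℕ} (hN : 0 < N)
    (f : ES N → EReal) (ξ : EReal) :
    volume {x : ES N | ξ < hatE f x} =
      volume (Metric.ball (0 : ES N) 1) * encRadius {x : ES N | ξ < f x} ^ N := by
  rw [setOf_lt_hatE, volume_eball_zero hN]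

end
end

section
/- If f : ℝ^N → [0, ∞] and the transform f̂ is identically 0, then either f is identically 0, or there exist x₀ ∈ ℝ^N and z ∈ (0, ∞] such that f(x₀) = z and f(x) = 0 for all x ≠ x₀. -/
open MeasureTheory Filter Set
open scoped ENNReal NNReal Pointwise

noncomputable section

variable {N : ℕ}

/-- Any two points of a set are at distance at most twice its enclosing radius. -/
lemma edist_le_two_mul_encRadius {N : ℕ} {X : Set (ES N)} {x y : ES N}
    (hx : x ∈ X) (hy : y ∈ X) : edist x y ≤ 2 * encRadius X := by
  rw [mul_comm, ← ENNReal.div_le_iff_le_mul (by simp) (by simp)]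
  refine le_sInf ?_
  rintro r ⟨c, hc⟩
  rw [ENNReal.div_le_iff_le_mul (by simp) (by simp), mul_two]
  exact (edist_triangle_right x y c).trans (add_le_add (hc x hx) (hc y hy))

theorem eq_zero_or_single_point_of_hatT_eq_zero {N : ℕ}
    (f : ES N → ℝ≥0∞) (hf : ∀ x, hatT f x = 0) :
    (∀ x, f x = 0) ∨
      ∃ (x₀ : ES N) (z : ℝ≥0∞), 0 < z ∧ f x₀ = z ∧ ∀ x, x ≠ x₀ → f x = 0 := by
  by_cases h : ∀ x, f x = 0
  · exact Or.inl h
  push Not at h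
  obtain ⟨x₀, hx₀⟩ := h
  refine Or.inr ⟨x₀, f x₀, pos_iff_ne_zero.2 hx₀, rfl, fun x hne => ?_⟩
  by_contra hx
  have hlt : hatT f 0 < min (f x) (f x₀) := by
    rw [hf 0]
    exact lt_min (pos_iff_ne_zero.2 hx) (pos_iff_ne_zero.2 hx₀)
  obtain ⟨ξ, hξ, hξlt⟩ := sInf_lt_iff.1 hlt
  have hrad : encRadius {y | ξ < f y} = 0 := by simpa using hξ
  have hdist := edist_le_two_mul_encRadius (X := {y | ξ < f y})
    (hξlt.trans_le (min_le_left _ _)) (hξlt.trans_le (min_le_right _ _))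
  rw [hrad, mul_zero] at hdist
  exact hne (edist_le_zero.1 hdist)

end
end

section
/- For every f : ℝ^N → [0, ∞], the transform of the pointwise reciprocal equals the pointwise reciprocal of the lower transform: (f⁻¹)^ = (f̌)⁻¹ as functions on ℝ^N. -/
open MeasureTheory Filter Set
open scoped ENNReal NNReal Pointwise

noncomputable section

variable {N : ℕ}

theorem hatT_inv_eq_inv_checkT {N : ℕ} (f : ES N → ℝ≥0∞) :
    hatT (fun y => (f y)⁻¹) = fun x => (checkT f x)⁻¹ := by
  funext x
  rw [hatT, checkT, ENNReal.inv_sSup, ← sInf_image, Set.image_inv_eq_inv]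
  congr 1
  ext ξ
  simp only [Set.mem_inv, Set.mem_ofPred_eq, ENNReal.lt_inv_iff_lt_inv]

end
end

section
/- If φ is a Young function and f : ℝ^N → [0, ∞], then the transform of the composition equals the composition with the transform: (φ∘f)^ = φ∘f̂ as functions on ℝ^N. -/
open MeasureTheory Filter Set
open scoped ENNReal NNReal Pointwise

noncomputable section

variable {N : ℕ}

/-- By compactness of closed balls, the enclosing radius is determined by finite subsets. -/
theorem encRadius_le_of_forall_finset {N : ℕ} {X : Set (ES N)} {t : ℝ≥0}
    (h : ∀ u : Finset (ES N), (u : Set (ES N)) ⊆ X → encRadius (u : Set (ES N)) ≤ t) :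
    encRadius X ≤ t := by
  classical
  rcases X.eq_empty_or_nonempty with rfl | ⟨y, hy⟩
  · simpa using h ∅ (by simp)
  let Z : X × Set.Ioi (t : ℝ≥0∞) → Set (ES N) := fun p => {c | edist (p.1 : ES N) c ≤ p.2}
  have hZ : ∀ p, IsClosed (Z p) := fun p =>
    isClosed_le (continuous_const.edist continuous_id) continuous_const
  have hfin : ∀ v : Finset (X × Set.Ioi (t : ℝ≥0∞)),
      (Metric.closedBall y (t + 1) ∩ ⋂ p ∈ v, Z p).Nonempty := by
    intro v
    let u : Finset (ES N) := insert y (v.image fun p => (p.1 : ES N))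
    have hu : (u : Set (ES N)) ⊆ X := by
      intro z hz
      simp only [u, Finset.coe_insert, Finset.coe_image, Set.mem_insert_iff, Set.mem_image] at hz
      rcases hz with rfl | ⟨p, -, rfl⟩
      exacts [hy, p.1.2]
    have hs : (t : ℝ≥0∞) < min ((t + 1 : ℝ≥0) : ℝ≥0∞) (v.inf fun p => (p.2 : ℝ≥0∞)) := by
      refine lt_min (by exact_mod_cast lt_add_one t) ?_
      exact (Finset.lt_inf_iff ENNReal.coe_lt_top).2 fun p _ => p.2.2
    obtain ⟨r, ⟨c, hc⟩, hr⟩ := sInf_lt_iff.1 ((h u hu).trans_lt hs)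
    refine ⟨c, ?_, ?_⟩
    · have hyc := (hc y (by simp [u])).trans (hr.le.trans (min_le_left _ _))
      rw [edist_nndist, ENNReal.coe_le_coe] at hyc
      rw [Metric.mem_closedBall, dist_comm]
      exact_mod_cast hyc
    · refine Set.mem_iInter₂.2 fun p hp => ?_
      have hpu : (p.1 : ES N) ∈ (u : Set (ES N)) :=
        Finset.mem_coe.2 (Finset.mem_insert_of_mem (Finset.mem_image_of_mem _ hp))
      exact (hc _ hpu).trans (hr.le.trans ((min_le_right _ _).trans (Finset.inf_le hp)))
  obtain ⟨c, -, hc⟩ := (isCompact_closedBall y (t + 1 : ℝ)).inter_iInter_nonempty Z hZ hfin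
  refine le_of_forall_gt_imp_ge_of_dense fun s hs => sInf_le ⟨c, fun x hx => ?_⟩
  exact Set.mem_iInter.1 hc (⟨x, hx⟩, ⟨s, hs⟩)

/-- The infimum defining `hatT` is attained. -/
theorem encRadius_lt_hatT_le {N : ℕ} (f : ES N → ℝ≥0∞) (x : ES N) :
    encRadius {y | hatT f x < f y} ≤ (‖x‖₊ : ℝ≥0∞) := by
  refine encRadius_le_of_forall_finset fun u hu => ?_
  rcases eq_or_ne (hatT f x) ⊤ with htop | htop
  · have hempty : (u : Set (ES N)) ⊆ ∅ := fun y hy => by simpa [htop] using hu hy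
    exact (sInf_le ⟨0, fun y hy => (hempty hy).elim⟩ : encRadius _ ≤ 0).trans zero_le
  · have hlt : hatT f x < u.inf f := (Finset.lt_inf_iff htop.lt_top).2 fun y hy => hu hy
    obtain ⟨η, hη, hηu⟩ := sInf_lt_iff.1 hlt
    exact (encRadius_mono fun y hy => hηu.trans_le (Finset.inf_le hy)).trans hη

theorem hatT_comp_young {N : ℕ} (φ : ℝ≥0∞ → ℝ≥0∞) (hφ : IsYoungFunction φ)
    (f : ES N → ℝ≥0∞) :
    hatT (fun x => φ (f x)) = fun x => φ (hatT f x) := by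
  funext x
  refine le_antisymm (sInf_le ?_) (le_sInf fun ξ hξ => ?_)
  · exact (encRadius_mono fun y hy => hφ.mono.reflect_lt hy).trans (encRadius_lt_hatT_le f x)
  · by_contra! hlt
    have hpos : 0 < hatT f x := by
      refine pos_iff_ne_zero.2 fun h0 => ?_
      simp [h0, hφ.map_zero] at hlt
    have : (nhdsWithin (hatT f x) (Set.Iio (hatT f x))).NeBot :=
      nhdsLT_neBot_of_exists_lt ⟨0, hpos⟩
    obtain ⟨η, hη, hηm⟩ := (((hφ.left_continuous (hatT f x)).eventually_const_lt hlt).and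
      self_mem_nhdsWithin).exists
    refine (sInf_le ?_ : hatT f x ≤ η).not_gt hηm
    exact (encRadius_mono fun y (hy : η < f y) => hη.trans_le (hφ.mono hy.le)).trans hξ

end
end

section
/- If φ is a Young function and f : ℝ^N → [0, ∞] is Lebesgue measurable, then ‖f‖_φ ≤ ‖f̂‖_φ. -/
open MeasureTheory Filter Set
open scoped ENNReal NNReal Pointwise

noncomputable section

variable {N : ℕ}

/-- Integrals of `[0,∞]`-valued functions are monotone under comparison of the measures of strict
upper level sets. -/
theorem lintegral_le_lintegral_of_measure_lt_le {α : Type*} [MeasurableSpace α] {μ : Measure α}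
    {f g : α → ℝ≥0∞} (hf : AEMeasurable f μ) (hg : AEMeasurable g μ)
    (h : ∀ t, μ {x | t < f x} ≤ μ {x | t < g x}) : ∫⁻ x, f x ∂μ ≤ ∫⁻ x, g x ∂μ := by
  have layercake : ∀ {k : α → ℝ≥0∞}, AEMeasurable k μ → ∀ n : ℕ,
      ∫⁻ x, min (k x) n ∂μ =
        ∫⁻ t in Ioi (0 : ℝ), μ {x | ENNReal.ofReal t < min (k x) n} := by
    intro k hk n
    have hfin : ∀ x, min (k x) (n : ℝ≥0∞) ≠ ∞ := fun x =>
      ((min_le_right _ _).trans_lt (ENNReal.natCast_lt_top n)).ne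
    have hm : AEMeasurable (fun x => (min (k x) (n : ℝ≥0∞)).toReal) μ :=
      (hk.min aemeasurable_const).ennreal_toReal
    have key := lintegral_eq_lintegral_meas_lt μ
      (Eventually.of_forall fun x => ENNReal.toReal_nonneg) hm
    simp only [ENNReal.ofReal_toReal (hfin _)] at key
    rw [key]
    refine setLIntegral_congr_fun measurableSet_Ioi fun t ht => ?_
    simp only [ENNReal.ofReal_lt_iff_lt_toReal (le_of_lt ht) (hfin _)]
  have hsup : ∫⁻ x, f x ∂μ = ⨆ n : ℕ, ∫⁻ x, min (f x) n ∂μ := by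
    rw [← lintegral_iSup' (fun n => hf.min aemeasurable_const)
      (Eventually.of_forall fun x m n hmn => min_le_min le_rfl (Nat.cast_le.2 hmn))]
    refine lintegral_congr fun x => ?_
    rw [← inf_iSup_eq, ENNReal.iSup_natCast, inf_top_eq]
  rw [hsup]
  refine iSup_le fun n => ?_
  calc ∫⁻ x, min (f x) n ∂μ ≤ ∫⁻ x, min (g x) n ∂μ := by
        rw [layercake hf, layercake hg]
        refine lintegral_mono fun t => ?_
        by_cases ht : ENNReal.ofReal t < n
        · simpa only [lt_min_iff, ht, and_true] using h _
        · simp [ht]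
    _ ≤ ∫⁻ x, g x ∂μ := lintegral_mono fun x => min_le_left _ _

/-- A set has at most the measure of the open ball whose radius is its enclosing radius. -/
theorem volume_le_volume_nnnorm_lt_encRadius {N : ℕ} (hN : 0 < N) (X : Set (ES N)) :
    volume X ≤ volume {x : ES N | (‖x‖₊ : ℝ≥0∞) < encRadius X} := by
  have : Nonempty (Fin N) := ⟨⟨0, hN⟩⟩
  rcases eq_or_ne (encRadius X) ∞ with htop | hfin
  · simp [htop]
  set R := (encRadius X).toReal with hR
  have hR0 : 0 ≤ R := ENNReal.toReal_nonneg
  have hball : {x : ES N | (‖x‖₊ : ℝ≥0∞) < encRadius X} = Metric.ball 0 R := by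
    ext x
    rw [mem_ofPred_eq, mem_ball_zero_iff, hR, ← ENNReal.ofReal_lt_iff_lt_toReal (norm_nonneg x) hfin,
      ofReal_norm, enorm_eq_nnnorm]
  rw [hball, ← Measure.addHaar_closedBall_eq_addHaar_ball]
  have hbound : ∀ s : ℝ, R < s → volume X ≤ volume (Metric.closedBall (0 : ES N) s) := by
    intro s hs
    have hs0 : 0 ≤ s := hR0.trans hs.le
    have hlt : encRadius X < ENNReal.ofReal s :=
      (ENNReal.lt_ofReal_iff_toReal_lt hfin).2 hs
    obtain ⟨r, ⟨c, hc⟩, hr⟩ := sInf_lt_iff.1 hlt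
    rw [← Measure.addHaar_closedBall_center volume c s]
    refine measure_mono fun x hx => ?_
    rw [Metric.mem_closedBall, ← edist_le_ofReal hs0]
    exact (hc x hx).trans hr.le
  have hlim : Tendsto (fun s : ℝ => volume (Metric.closedBall (0 : ES N) s)) (nhdsWithin R (Ioi R))
      (nhds (volume (Metric.closedBall (0 : ES N) R))) := by
    have hformula : ∀ s : ℝ, 0 ≤ s → volume (Metric.closedBall (0 : ES N) s) =
        ENNReal.ofReal (s ^ Module.finrank ℝ (ES N)) * volume (Metric.ball (0 : ES N) 1) :=
      fun s hs => Measure.addHaar_closedBall volume 0 hs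
    rw [hformula R hR0]
    refine Tendsto.congr' (eventually_mem_nhdsWithin.mono fun s hs =>
      (hformula s (hR0.trans (le_of_lt hs))).symm) ?_
    refine ENNReal.Tendsto.mul_const ?_ (Or.inr measure_ball_lt_top.ne)
    exact ((ENNReal.continuous_ofReal.comp (continuous_pow _)).tendsto R).mono_left
      nhdsWithin_le_nhds
  exact ge_of_tendsto hlim (eventually_mem_nhdsWithin.mono hbound)

theorem le_hatT_of_nnnorm_lt_encRadius {N : ℕ} {f : ES N → ℝ≥0∞} {η : ℝ≥0∞} {x : ES N}
    (h : (‖x‖₊ : ℝ≥0∞) < encRadius {y | η < f y}) : η ≤ hatT f x := by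
  refine le_sInf fun ξ hξ => le_of_not_gt fun hlt => ?_
  exact (h.trans_le ((encRadius_mono fun y hy => hlt.trans hy).trans hξ)).false

theorem volume_lt_le_volume_lt_hatT {N : ℕ} (hN : 0 < N) (f : ES N → ℝ≥0∞) (ξ : ℝ≥0∞) :
    volume {x | ξ < f x} ≤ volume {x | ξ < hatT f x} := by
  rcases eq_or_ne ξ ∞ with rfl | hξ
  · simp
  obtain ⟨u, hanti, hu, hlim⟩ := exists_seq_strictAnti_tendsto' (lt_top_iff_ne_top.2 hξ)
  have hunion : {x | ξ < f x} = ⋃ n, {x | u n < f x} := by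
    ext x
    simp only [mem_ofPred_eq, mem_iUnion]
    exact ⟨fun hx => (hlim.eventually_lt_const hx).exists, fun ⟨n, hn⟩ => (hu n).1.trans hn⟩
  have hmono : Monotone fun n => {x | u n < f x} := fun m n hmn x hx =>
    (hanti.antitone hmn).trans_lt hx
  rw [hunion, hmono.measure_iUnion]
  refine iSup_le fun n => (volume_le_volume_nnnorm_lt_encRadius hN _).trans (measure_mono ?_)
  exact fun x hx => (hu n).1.trans_le (le_hatT_of_nnnorm_lt_encRadius hx)

theorem measurable_hatT {N : ℕ} (f : ES N → ℝ≥0∞) : Measurable (hatT f) := by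
  have hanti : Antitone fun t : ℝ≥0 => sInf {ξ : ℝ≥0∞ | encRadius {y | ξ < f y} ≤ t} :=
    fun s t hst => sInf_le_sInf fun ξ hξ => le_trans hξ (ENNReal.coe_le_coe.2 hst)
  exact hanti.measurable.comp measurable_nnnorm

/-- Strict upper level sets of a Young function are open half-lines. -/
theorem IsYoungFunction.exists_lt_map_iff {φ : ℝ≥0∞ → ℝ≥0∞} (hφ : IsYoungFunction φ)
    (t : ℝ≥0∞) : ∃ a, ∀ s, t < φ s ↔ a < s := by
  set A := {s | φ s ≤ t}
  have hsup : φ (sSup A) ≤ t := by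
    have hcont : ContinuousWithinAt φ A (sSup A) :=
      (continuousWithinAt_insert_self.2 (hφ.left_continuous (sSup A))).mono fun s hs => by
        simpa using le_sSup hs
    rw [(hφ.mono.monotoneOn A).map_sSup_of_continuousWithinAt hcont hφ.map_zero]
    exact sSup_le (forall_mem_image.2 fun s hs => hs)
  refine ⟨sSup A, fun s => ⟨fun hs => ?_, fun hs => ?_⟩⟩
  · exact lt_of_not_ge fun hle => (hs.trans_le ((hφ.mono hle).trans hsup)).false
  · exact lt_of_not_ge fun hle => (hs.trans_le (le_sSup hle)).false

theorem luxNorm_le_luxNorm_hatT {N : ℕ} (hN : 0 < N)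
    (φ : ℝ≥0∞ → ℝ≥0∞) (hφ : IsYoungFunction φ)
    (f : ES N → ℝ≥0∞) (hf : AEMeasurable f (volume : Measure (ES N))) :
    luxNorm φ f ≤ luxNorm φ (hatT f) := by
  refine sInf_le_sInf fun r ⟨hr, hint⟩ => ⟨hr, le_trans ?_ hint⟩
  refine lintegral_le_lintegral_of_measure_lt_le
    (hφ.mono.measurable.comp_aemeasurable (hf.const_mul _))
    (hφ.mono.measurable.comp ((measurable_hatT f).const_mul _)).aemeasurable fun t => ?_
  obtain ⟨a, ha⟩ := hφ.exists_lt_map_iff t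
  simp only [ha]
  rcases eq_or_ne r ∞ with rfl | hr_top
  · simp
  · have hscale : ∀ s, a < r⁻¹ * s ↔ r * a < s := fun s => by
      rw [← ENNReal.mul_lt_mul_iff_right hr.ne' hr_top, ENNReal.mul_inv_cancel_left hr.ne' hr_top]
    simp only [hscale]
    exact volume_lt_le_volume_lt_hatT hN f _

end
end
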